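/- Let V be a finite type, B a type of blocks, E : V → B → V → Prop an edge-labeled directed multigraph, S F : V, N : ℕ, and x : B. If there is a walk from S to F with trace t such that x ∈ lruRun N [] t, then there is a walk from S to F with trace t' such that t'.length ≤ 2 * Fintype.card V and x ∈ lruRun N [] t'. (Hence the LRU exist-hit problem remains in NP even for cyclic control-flow graphs.) -/

import Mathlib

/-- One access to an LRU cache of associativity `N`. -/
def lruAccess {B : Type*} [DecidableEq B] (N : ℕ) (w : List B) (a : B) : List B :=
  if a ∈ w then w.erase a ++ [a]
  else if w.length < N then w ++ [a]
  else w.tail ++ [a]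

/-- Process a list of accesses in order, starting from state `w`. -/
def lruRun {B : Type*} [DecidableEq B] (N : ℕ) (w t : List B) : List B :=
  t.foldl (lruAccess N) w

/-- `Walk E u v t`: there is a walk from `u` to `v` in the edge-labeled directed
multigraph `E` whose list of edge labels, in order, is `t`. -/
inductive Walk {V B : Type*} (E : V → B → V → Prop) : V → V → List B → Prop
  | nil (v : V) : Walk E v v []
  | cons {u v w : V} {b : B} {t : List B} :
      E u b v → Walk E v w t → Walk E u w (b :: t)

/-!
Starting from the empty cache, LRU always holds the most recently accessed distinct blocks: the
final entries of the trace after deleting all but the last occurrence of each block. Hence `x` is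
cached at the end iff it was accessed and fewer distinct blocks than the cache can hold have been
accessed since. Cut the walk at the last access to `x`, and excise cycles separately from the part
before it and the part after it. Excision introduces no new labels, so `x` survives, and each part
becomes shorter than the number of vertices.
-/

open scoped List

section Lists

variable {α : Type*}

theorem exists_eq_append_cons_notMem_right {x : α} {t : List α} (h : x ∈ t) :
    ∃ p s, t = p ++ x :: s ∧ x ∉ s := by
  obtain ⟨s, p, hsp, hs⟩ := List.eq_append_cons_of_mem (List.mem_reverse.2 h)
  exact ⟨p.reverse, s.reverse, by simpa using congrArg List.reverse hsp, by simpa using hs⟩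

theorem rtake_suffix (l : List α) (n : ℕ) : l.rtake n <:+ l :=
  List.drop_suffix _ _

theorem rtake_of_length_le {l : List α} {n : ℕ} (h : l.length ≤ n) : l.rtake n = l := by
  simp [List.rtake, Nat.sub_eq_zero_of_le h]

theorem length_rtake (l : List α) (n : ℕ) : (l.rtake n).length = min n l.length := by
  rw [List.rtake, List.length_drop]
  omega

theorem tail_rtake_succ {l : List α} {n : ℕ} (h : n < l.length) :
    (l.rtake (n + 1)).tail = l.rtake n := by
  rw [List.rtake, List.rtake, List.tail_drop]
  congr 1
  omega

theorem mem_rtake_append_cons_iff {x : α} {l r : List α} {n : ℕ} (hr : x ∉ r) :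
    x ∈ (l ++ x :: r).rtake n ↔ r.length < n := by
  classical
  have hmem : x ∈ (l ++ x :: r).reverse := by simp
  rw [List.rtake_eq_reverse_take_reverse, List.mem_reverse, List.mem_take_iff_idxOf_lt hmem,
    List.reverse_append, List.reverse_cons, List.append_assoc,
    List.idxOf_append_of_notMem (by simpa using hr)]
  simp

variable [DecidableEq α]

theorem dedup_concat (l : List α) (a : α) : (l ++ [a]).dedup = l.dedup.erase a ++ [a] := by
  induction l with
  | nil => simp
  | cons b l ih =>
    by_cases hb : b ∈ l
    · simp [hb, ih]
    · by_cases hba : b = a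
      · subst hba
        simp [hb, ih, List.erase_of_not_mem]
      · simp [hb, hba, ih]

theorem erase_rtake_succ_of_mem {l : List α} {a : α} {n : ℕ} (hl : l.Nodup)
    (ha : a ∈ l.rtake (n + 1)) : (l.rtake (n + 1)).erase a = (l.erase a).rtake n := by
  induction l using List.reverseRecOn generalizing n with
  | nil => simp at ha
  | append_singleton l b ih =>
    rw [← List.concat_eq_append, List.nodup_concat] at hl
    rw [List.rtake_concat_succ, List.mem_append, List.mem_singleton] at ha
    rw [List.rtake_concat_succ]
    rcases ha with ha | rfl
    · have hal : a ∈ l := (rtake_suffix l n).mem ha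
      cases n with
      | zero => simp at ha
      | succ n =>
        rw [List.erase_append_left _ ha, List.erase_append_left _ hal, ih hl.2 ha,
          List.rtake_concat_succ]
    · rw [List.erase_append_right _ hl.1,
        List.erase_append_right _ fun h ↦ hl.1 ((rtake_suffix l n).mem h)]
      simp

theorem rtake_erase_of_notMem {l : List α} {a : α} {n : ℕ} (ha : a ∉ l.rtake n) :
    (l.erase a).rtake n = l.rtake n := by
  rcases Nat.lt_or_ge l.length n with hn | hn
  · rw [rtake_of_length_le hn.le] at ha
    rw [List.erase_of_not_mem ha]
  obtain ⟨u, hu⟩ := rtake_suffix l n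
  have hlen : (l.rtake n).length = n := by rw [length_rtake, min_eq_left hn]
  have rtake_append (v : List α) : (v ++ l.rtake n).rtake n = l.rtake n := by
    rw [List.rtake, List.drop_left' (by simp [hlen])]
  nth_rw 1 [← hu]
  by_cases hau : a ∈ u
  · rw [List.erase_append_left _ hau, rtake_append]
  · rw [List.erase_append_right _ hau, List.erase_of_not_mem ha, rtake_append]

end Lists

section Lru

variable {B : Type*} [DecidableEq B]

/-- The capacity is `max N 1` rather than `N` because `lruAccess 0` still inserts the accessed
block: evicting from an empty list frees no space, so `N = 0` behaves as `N = 1`. -/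
theorem lruAccess_rtake {l : List B} (hl : l.Nodup) (N : ℕ) (a : B) :
    lruAccess N (l.rtake (max N 1)) a = (l.erase a ++ [a]).rtake (max N 1) := by
  obtain ⟨n, hn⟩ : ∃ n, max N 1 = n + 1 := Nat.exists_eq_add_one.2 (by omega)
  rw [hn, List.rtake_concat_succ, lruAccess]
  split_ifs with hhit hfree
  · rw [erase_rtake_succ_of_mem hl hhit]
  · rw [length_rtake] at hfree
    rw [rtake_of_length_le (by omega : l.length ≤ n + 1)] at hhit ⊢
    rw [List.erase_of_not_mem hhit, rtake_of_length_le (by omega)]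
  · rw [length_rtake] at hfree
    rcases l.length.eq_zero_or_pos with hzero | hpos
    · simp [List.length_eq_zero_iff.1 hzero]
    have htail := tail_rtake_succ (show n < l.length by omega)
    rw [htail, rtake_erase_of_notMem (htail ▸ mt List.mem_of_mem_tail hhit)]

theorem lruRun_nil_eq_rtake_dedup (N : ℕ) (t : List B) :
    lruRun N [] t = t.dedup.rtake (max N 1) := by
  induction t using List.reverseRecOn with
  | nil => simp [lruRun]
  | append_singleton t a ih =>
    rw [dedup_concat, ← lruAccess_rtake t.nodup_dedup, ← ih]
    simp [lruRun]

theorem mem_of_mem_lruRun_nil {N : ℕ} {x : B} {t : List B} (h : x ∈ lruRun N [] t) : x ∈ t := by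
  rw [lruRun_nil_eq_rtake_dedup] at h
  exact List.mem_dedup.1 ((rtake_suffix _ _).mem h)

theorem mem_lruRun_nil_append_cons_iff {N : ℕ} {x : B} {p s : List B} (hs : x ∉ s) :
    x ∈ lruRun N [] (p ++ x :: s) ↔ s.toFinset.card < max N 1 := by
  obtain ⟨q, hq⟩ := List.suffix_union_right p (x :: s.dedup)
  rw [lruRun_nil_eq_rtake_dedup, List.dedup_append, List.dedup_cons_of_notMem hs, ← hq,
    mem_rtake_append_cons_iff (mt List.mem_dedup.1 hs), List.card_toFinset]

theorem mem_lruRun_nil_append_cons_of_subset {N : ℕ} {x : B} {p p' s s' : List B} (hs : x ∉ s)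
    (hsub : s' ⊆ s) (hx : x ∈ lruRun N [] (p ++ x :: s)) :
    x ∈ lruRun N [] (p' ++ x :: s') := by
  rw [mem_lruRun_nil_append_cons_iff hs] at hx
  rw [mem_lruRun_nil_append_cons_iff (fun h ↦ hs (hsub h))]
  have hfin : s'.toFinset ⊆ s.toFinset := fun y ↦ by simpa using @hsub y
  exact (Finset.card_le_card hfin).trans_lt hx

end Lru

namespace Walk

variable {V B : Type*} {E : V → B → V → Prop} {u v w : V} {p s t : List B}

theorem append (h : Walk E u v p) (h' : Walk E v w s) : Walk E u w (p ++ s) := by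
  induction h with
  | nil => exact h'
  | cons e _ ih => exact cons e (ih h')

theorem exists_of_append (h : Walk E u w (p ++ s)) : ∃ v, Walk E u v p ∧ Walk E v w s := by
  induction p generalizing u with
  | nil => exact ⟨u, nil u, h⟩
  | cons b p ih =>
    obtain _ | ⟨e, h⟩ := h
    obtain ⟨v, hp, hs⟩ := ih h
    exact ⟨v, cons e hp, hs⟩

theorem exists_sublist_length_lt_of_card_le [Fintype V] (h : Walk E u v t)
    (ht : Fintype.card V ≤ t.length) : ∃ t', Walk E u v t' ∧ t' <+ t ∧ t'.length < t.length := by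
  have hsplit (i : Fin (t.length + 1)) :
      ∃ z, Walk E u z (t.take i) ∧ Walk E z v (t.drop i) :=
    exists_of_append (by rwa [List.take_append_drop])
  choose vertexAt hpre hsuf using hsplit
  obtain ⟨i, j, hij, hf⟩ :=
    Fintype.exists_ne_map_eq_of_card_lt vertexAt (by simpa using Nat.lt_succ_of_le ht)
  wlog hlt : i < j generalizing i j
  · exact this j i hij.symm hf.symm (lt_of_le_of_ne (not_lt.1 hlt) hij.symm)
  refine ⟨t.take i ++ t.drop j, (hpre i).append (hf ▸ hsuf j), ?_, ?_⟩
  · calc t.take i ++ t.drop j <+ t.take i ++ t.drop i :=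
        (List.drop_sublist_drop_left t hlt.le).append_left _
      _ = t := List.take_append_drop _ _
  · simp only [List.length_append, List.length_take, List.length_drop]
    omega

theorem exists_sublist_length_lt_card [Fintype V] (h : Walk E u v t) :
    ∃ t', Walk E u v t' ∧ t' <+ t ∧ t'.length < Fintype.card V := by
  induction hn : t.length using Nat.strong_induction_on generalizing t with
  | _ n ih =>
    rcases lt_or_ge t.length (Fintype.card V) with ht | ht
    · exact ⟨t, h, .refl t, ht⟩
    · obtain ⟨t', h', hsub, hlt⟩ := h.exists_sublist_length_lt_of_card_le ht
      obtain ⟨t'', h'', hsub', hlt'⟩ := ih _ (hn ▸ hlt) h' rfl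
      exact ⟨t'', h'', hsub'.trans hsub, hlt'⟩

end Walk

/-- if some walk from `S` to `F` leaves `x` in the LRU cache
(starting from the empty cache), then some walk of length at most
`2 * Fintype.card V` does, so LRU exist-hit is in NP even for cyclic
control-flow graphs. -/
theorem lru_exist_hit_short_witness {V B : Type*} [Fintype V] [DecidableEq B]
    (E : V → B → V → Prop) (S F : V) (N : ℕ) (x : B) (t : List B)
    (hwalk : Walk E S F t) (hx : x ∈ lruRun N ([] : List B) t) :
    ∃ t' : List B, Walk E S F t' ∧ t'.length ≤ 2 * Fintype.card V ∧
      x ∈ lruRun N ([] : List B) t' := by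
  obtain ⟨p, s, rfl, hxs⟩ := exists_eq_append_cons_notMem_right (mem_of_mem_lruRun_nil hx)
  obtain ⟨u, hp, _ | ⟨hedge, hs⟩⟩ := hwalk.exists_of_append
  obtain ⟨p', hp', -, hplen⟩ := hp.exists_sublist_length_lt_card
  obtain ⟨s', hs', hsub, hslen⟩ := hs.exists_sublist_length_lt_card
  refine ⟨p' ++ x :: s', hp'.append (.cons hedge hs'), ?_,
    mem_lruRun_nil_append_cons_of_subset hxs hsub.subset hx⟩
  simp only [List.length_append, List.length_cons]
  omega
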